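/- Let X be a scheme which is partially proper over a noetherian scheme. Then X is a locally finite union of quasi-compact closed subsets: the family of closures Z_η of minimal points η of X consists of quasi-compact closed sets covering X, and every quasi-compact open subset of X meets only finitely many of the Z_η. -/

import Mathlib

open AlgebraicGeometry CategoryTheory

universe u

/-- A morphism of schemes is *universally specializing* if every base change of it is a
specializing map on underlying topological spaces. -/
def UniversallySpecializing : MorphismProperty Scheme.{u} :=
  (AlgebraicGeometry.topologically fun f => SpecializingMap f).universally

/-- A morphism of schemes is *partially proper* if it is separated, locally of finite type
and universally specializing. -/
def PartiallyProper {X Y : Scheme.{u}} (f : X ⟶ Y) : Prop :=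
  IsSeparated f ∧ LocallyOfFiniteType f ∧ UniversallySpecializing f

/-- A *minimal point* of a topological space is a point with no proper generization, i.e.
the generic point of an irreducible component. -/
def IsMinimalPoint {T : Type*} [TopologicalSpace T] (η : T) : Prop :=
  ∀ x : T, η ∈ closure {x} → x = η


open TopologicalSpace

/-- The closed point of the spectrum of a local ring, as a point of the scheme. -/
noncomputable def ppc (V : CommRingCat.{u}) [IsLocalRing V] : (Spec V : Scheme.{u}) :=
  (IsLocalRing.closedPoint V : PrimeSpectrum V)

lemma ppc_specializes (V : CommRingCat.{u}) [IsLocalRing V] (p : (Spec V : Scheme.{u})) :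
    p ⤳ ppc V :=
  IsLocalRing.specializes_closedPoint (R := V) p

lemma ppc_map {V V' : CommRingCat.{u}} [IsLocalRing V] [IsLocalRing V'] (β : V ⟶ V')
    [IsLocalHom β.hom] : Spec.map β (ppc V') = ppc V :=
  IsLocalRing.comap_closedPoint (S := V') β.hom

lemma ppc_fromSpecStalk (X : Scheme.{u}) (x : X) : X.fromSpecStalk x (ppc _) = x :=
  X.fromSpecStalk_closedPoint

/-- A map from the spectrum of a local ring sending the closed point into an affine open `W`
factors through `W`. -/
lemma pp_factor_affine {Y : Scheme.{u}} {W : Y.Opens} (hW : IsAffineOpen W) (V : CommRingCat.{u})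
    [IsLocalRing V] (g : Spec V ⟶ Y) (h : g (ppc V) ∈ W) :
    ∃ ψ : Γ(Y, W) ⟶ V, Spec.map ψ ≫ hW.fromSpec = g := by
  have hr : Set.range g ⊆ Set.range hW.fromSpec := by
    rw [hW.range_fromSpec]
    rintro _ ⟨p, rfl⟩
    exact ((ppc_specializes V p).map g.continuous).mem_open W.2 h
  refine ⟨Spec.preimage (IsOpenImmersion.lift hW.fromSpec g hr), ?_⟩
  rw [Spec.map_preimage, IsOpenImmersion.lift_fac]

lemma pp_spec_map_cancel {Y : Scheme.{u}} {W : Y.Opens} (hW : IsAffineOpen W) {V : CommRingCat.{u}}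
    (a b : Γ(Y, W) ⟶ V) (h : Spec.map a ≫ hW.fromSpec = Spec.map b ≫ hW.fromSpec) : a = b :=
  Spec.map_injective ((cancel_mono _).1 h)

/-- Quasi-compactness of the Zariski–Riemann space. -/
lemma pp_zr_compact {K : Type*} [Field K] (R : Set K) {ι : Type*} (t : ι → Finset K)
    (h : ∀ V : ValuationSubring K, R ⊆ V → ∃ i, (t i : Set K) ⊆ V) :
    ∃ s : Finset ι, ∀ V : ValuationSubring K, R ⊆ V → ∃ i ∈ s, (t i : Set K) ⊆ V := by
  classical
  let χ : ValuationSubring K → (K → Bool) := fun V a => decide (a ∈ V)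
  let C : Set (K → Bool) := {c | (∀ a ∈ R, c a = true) ∧ c 1 = true ∧
    (∀ a b, c a = false ∨ c b = false ∨ c (a * b) = true) ∧
    (∀ a b, c a = false ∨ c b = false ∨ c (a + b) = true) ∧
    (∀ a, c a = false ∨ c (-a) = true) ∧
    (∀ a, c a = true ∨ c a⁻¹ = true)}
  have hcl : ∀ (a : K) (v : Bool), IsClosed {c : K → Bool | c a = v} := fun a v =>
    isClosed_eq (continuous_apply a) continuous_const
  have hC : IsClosed C := by
    have e : C = (⋂ a ∈ R, {c : K → Bool | c a = true}) ∩ ({c | c 1 = true} ∩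
      ((⋂ a, ⋂ b, ({c | c a = false} ∪ ({c | c b = false} ∪ {c | c (a * b) = true}))) ∩
      ((⋂ a, ⋂ b, ({c | c a = false} ∪ ({c | c b = false} ∪ {c | c (a + b) = true}))) ∩
      ((⋂ a, ({c | c a = false} ∪ {c | c (-a) = true})) ∩
      (⋂ a, ({c | c a = true} ∪ {c | c a⁻¹ = true})))))) := by
      ext c; simp [C]
    rw [e]
    refine (isClosed_biInter fun a _ => hcl _ _).inter ((hcl _ _).inter
      ((isClosed_iInter fun a => isClosed_iInter fun b =>
        (hcl _ _).union ((hcl _ _).union (hcl _ _))).inter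
      ((isClosed_iInter fun a => isClosed_iInter fun b =>
        (hcl _ _).union ((hcl _ _).union (hcl _ _))).inter
      ((isClosed_iInter fun a => (hcl _ _).union (hcl _ _)).inter
      (isClosed_iInter fun a => (hcl _ _).union (hcl _ _))))))
  have hsurj : ∀ c ∈ C, ∃ V : ValuationSubring K, R ⊆ V ∧ χ V = c := by
    rintro c ⟨hR, h1, hm, ha, hn, hi⟩
    have h0 : c 0 = true := by
      have := ha 1 (-1)
      have := hn 1
      simp_all
    refine ⟨{ carrier := {a | c a = true}
              mul_mem' := ?_
              one_mem' := h1
              add_mem' := ?_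
              zero_mem' := h0
              neg_mem' := ?_
              mem_or_inv_mem' := hi }, fun a h => hR a h, ?_⟩
    · intro a b h h'
      have := hm a b
      simp_all
    · intro a b h h'
      have := ha a b
      simp_all
    · intro a h
      have := hn a
      simp_all
    · ext a
      have : ∀ b : Bool, decide (b = true) = b := by decide
      exact (decide_eq_decide.2 Iff.rfl).trans (this (c a))
  let O : ι → Set (K → Bool) := fun i => ⋂ a ∈ t i, {c | c a = true}
  have hO : ∀ i, IsOpen (O i) := fun i =>
    isOpen_biInter_finset fun a _ =>
      (isOpen_discrete ({true} : Set Bool)).preimage (continuous_apply (A := fun _ : K => Bool) a)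
  have hmem : ∀ V i, χ V ∈ O i ↔ (t i : Set K) ⊆ V := by
    intro V i
    simp [O, χ, Set.subset_def]
  obtain ⟨s, hs⟩ := hC.isCompact.elim_finite_subcover O hO (by
    intro c hc
    obtain ⟨V, hV, rfl⟩ := hsurj c hc
    obtain ⟨i, hi⟩ := h V hV
    exact Set.mem_iUnion.2 ⟨i, (hmem V i).2 hi⟩)
  refine ⟨s, fun V hV => ?_⟩
  have : χ V ∈ C := by
    refine ⟨fun a h => by simpa [χ] using hV h, by simp [χ, one_mem], ?_, ?_, ?_, ?_⟩
    · intro a b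
      by_cases h1 : a ∈ V <;> by_cases h2 : b ∈ V <;> simp [χ, h1, h2]
      exact mul_mem h1 h2
    · intro a b
      by_cases h1 : a ∈ V <;> by_cases h2 : b ∈ V <;> simp [χ, h1, h2]
      exact add_mem h1 h2
    · intro a
      by_cases h1 : a ∈ V <;> simp [χ, h1]
    · intro a
      simpa [χ] using V.mem_or_inv_mem a
  obtain ⟨i, hi, h2⟩ := Set.mem_iUnion₂.1 (hs this)
  exact ⟨i, hi, (hmem V i).1 h2⟩

lemma pp_local_cover {X S : Scheme.{u}} (f : X ⟶ S) [IsSeparated f] [LocallyOfFiniteType f]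
    (hE : ValuativeCriterion.Existence f) (η : X) {W : S.Opens} (hW : IsAffineOpen W)
    (hη : f η ∈ W) :
    ∃ Q : Set X, IsCompact Q ∧ closure {η} ∩ f ⁻¹ᵁ W ⊆ Q := by
  classical
  have hp : ∀ p, (X.fromSpecResidueField η ≫ f) p ∈ W := by
    intro p
    rw [Scheme.Hom.comp_apply, Scheme.fromSpecResidueField_apply]; exact hη
  obtain ⟨φW, hφW⟩ := pp_factor_affine hW (X.residueField η) (X.fromSpecResidueField η ≫ f)
    (hp _)
  let ι := {U : X.Opens // IsAffineOpen U ∧ U ≤ f ⁻¹ᵁ W ∧ η ∈ U}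
  have hφ : ∀ U : ι, ∃ φ : Γ(X, U.1) ⟶ X.residueField η,
      Spec.map φ ≫ U.2.1.fromSpec = X.fromSpecResidueField η := fun U =>
    pp_factor_affine U.2.1 (X.residueField η) (X.fromSpecResidueField η)
      ((Scheme.fromSpecResidueField_apply η _).symm ▸ U.2.2.2)
  choose φ hφ using hφ
  have hcomp : ∀ U : ι, f.appLE W U.1 U.2.2.1 ≫ φ U = φW := by
    intro U
    apply pp_spec_map_cancel hW
    rw [hφW, Spec.map_comp, Category.assoc, hW.SpecMap_appLE_fromSpec f U.2.1, ← Category.assoc,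
      hφ]
  have hgen : ∀ U : ι, ∃ t : Finset (X.residueField η),
      ((t : Set (X.residueField η)) ⊆ Set.range (φ U).hom) ∧ ∀ V : ValuationSubring (X.residueField η),
        Set.range φW.hom ⊆ (V : Set (X.residueField η)) →
        (t : Set (X.residueField η)) ⊆ (V : Set (X.residueField η)) →
        Set.range (φ U).hom ⊆ (V : Set (X.residueField η)) := by
    intro U
    have hft := f.finiteType_appLE hW U.2.1 U.2.2.1
    algebraize [(f.appLE W U.1 U.2.2.1).hom]
    obtain ⟨s, hs⟩ := Algebra.FiniteType.out (R := Γ(S, W)) (A := Γ(X, U.1))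
    refine ⟨s.image (φ U).hom, by simp, ?_⟩
    rintro V hV ht _ ⟨b, rfl⟩
    have hb : b ∈ Algebra.adjoin Γ(S, W) (s : Set Γ(X, U.1)) := hs ▸ Algebra.mem_top
    induction hb using Algebra.adjoin_induction with
    | mem x hx => exact ht (by simpa using ⟨x, hx, rfl⟩)
    | algebraMap r =>
      apply hV
      refine ⟨r, ?_⟩
      rw [← hcomp U]
      rfl
    | add x y _ _ h1 h2 => rw [map_add]; exact add_mem h1 h2
    | mul x y _ _ h1 h2 => rw [map_mul]; exact mul_mem h1 h2
  choose t ht1 ht2 using hgen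
  obtain ⟨s, hs⟩ := pp_zr_compact (Set.range φW.hom) t (by
    intro V hV
    let ψ : Γ(S, W) ⟶ CommRingCat.of V := CommRingCat.ofHom
      (φW.hom.codRestrict V.toSubring (fun x => hV ⟨x, rfl⟩))
    have hψ : ψ ≫ CommRingCat.ofHom (algebraMap V (X.residueField η)) = φW := rfl
    have w : X.fromSpecResidueField η ≫ f =
        Spec.map (CommRingCat.ofHom (algebraMap V (X.residueField η))) ≫
          Spec.map ψ ≫ hW.fromSpec := by
      rw [← hφW, ← Spec.map_comp_assoc, hψ]
    obtain ⟨l, hl₁, hl₂⟩ : ∃ l : Spec (.of V) ⟶ X,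
        Spec.map (CommRingCat.ofHom (algebraMap V (X.residueField η))) ≫ l =
          X.fromSpecResidueField η ∧ l ≫ f = Spec.map ψ ≫ hW.fromSpec :=
      (hE { R := V, K := X.residueField η, commSq := ⟨w⟩, .. }).exists_lift.elim
        fun a => ⟨a.l, a.fac_left, a.fac_right⟩
    have hlW : l (ppc (.of V)) ∈ f ⁻¹ᵁ W := by
      change f (l _) ∈ W
      rw [← Scheme.Hom.comp_apply, hl₂, Scheme.Hom.comp_apply]
      have : hW.fromSpec (Spec.map ψ (ppc (.of V))) ∈ (W : Set S) := by
        rw [← hW.range_fromSpec]; exact ⟨_, rfl⟩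
      exact this
    obtain ⟨U, hU, hxU, hUW⟩ := (X.isBasis_affineOpens).exists_subset_of_mem_open hlW (f ⁻¹ᵁ W).2
    obtain ⟨U, hU, rfl⟩ := hU
    have hsp : η ⤳ l (ppc (.of V)) := by
      have h1 := Scheme.fromSpecResidueField_apply η (ppc (X.residueField η))
      rw [← hl₁, Scheme.Hom.comp_apply] at h1
      have h2 := (ppc_specializes (.of V) (Spec.map (CommRingCat.ofHom
        (algebraMap V (X.residueField η))) (ppc (X.residueField η)))).map l.continuous
      exact (specializes_of_eq h1.symm).trans h2
    let i : ι := ⟨U, hU, hUW, hsp.mem_open U.2 hxU⟩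
    refine ⟨i, (ht1 i).trans ?_⟩
    obtain ⟨θ, hθ⟩ := pp_factor_affine i.2.1 (CommRingCat.of V) l hxU
    have : φ i = θ ≫ CommRingCat.ofHom (algebraMap V (X.residueField η)) := by
      apply pp_spec_map_cancel i.2.1
      rw [hφ, Spec.map_comp, Category.assoc, hθ, hl₁]
    rw [this]
    rintro _ ⟨b, rfl⟩
    exact (θ.hom b).2)
  refine ⟨⋃ i ∈ s, (i.1 : Set X), s.isCompact_biUnion fun i _ => i.2.1.isCompact, ?_⟩
  rintro x ⟨hx, hxW⟩
  have hsp : η ⤳ x := specializes_iff_mem_closure.2 hx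
  let α : X.presheaf.stalk x ⟶ X.residueField η := X.presheaf.stalkSpecializes hsp ≫ X.residue η
  obtain ⟨V, hV, hloc⟩ := IsLocalRing.exists_factor_valuationRing α.hom
  let β : X.presheaf.stalk x ⟶ .of V := CommRingCat.ofHom (α.hom.codRestrict _ hV)
  let j : CommRingCat.of V ⟶ X.residueField η :=
    CommRingCat.ofHom (algebraMap V (X.residueField η))
  have hj : Function.Injective j.hom := Subtype.val_injective
  let l₁ : Spec (.of V) ⟶ X := Spec.map β ≫ X.fromSpecStalk x
  have hl₁ : Spec.map j ≫ l₁ = X.fromSpecResidueField η := by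
    rw [Scheme.fromSpecResidueField, ← Scheme.SpecMap_stalkSpecializes_fromSpecStalk hsp]
    simp_rw [l₁, ← Spec.map_comp_assoc]
    rfl
  have hl₁c : l₁ (ppc (.of V)) = x := by
    have : IsLocalHom β.hom := hloc
    rw [Scheme.Hom.comp_apply, ppc_map, ppc_fromSpecStalk]
  obtain ⟨ψ₁, hψ₁⟩ := pp_factor_affine hW (CommRingCat.of V) (l₁ ≫ f)
    (by rw [Scheme.Hom.comp_apply, hl₁c]; exact hxW)
  have hψ₁' : ψ₁ ≫ j = φW := by
    apply pp_spec_map_cancel hW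
    rw [hφW, Spec.map_comp, Category.assoc, hψ₁, ← Category.assoc, hl₁]
  have hRV : Set.range φW.hom ⊆ V := by
    rw [← hψ₁']
    rintro _ ⟨b, rfl⟩
    exact (ψ₁.hom b).2
  obtain ⟨i, his, hi⟩ := hs V hRV
  have hiV := ht2 i V hRV hi
  let θ : Γ(X, i.1) ⟶ .of V := CommRingCat.ofHom
    ((φ i).hom.codRestrict V.toSubring (fun b => hiV ⟨b, rfl⟩))
  have hθ : θ ≫ j = φ i := rfl
  let l₂ : Spec (.of V) ⟶ X := Spec.map θ ≫ i.2.1.fromSpec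
  have hl₂ : Spec.map j ≫ l₂ = X.fromSpecResidueField η := by
    rw [← hφ i, ← hθ, Spec.map_comp, Category.assoc]
  have hl₂c : ∀ p, l₂ p ∈ i.1 := by
    intro p
    have : i.2.1.fromSpec (Spec.map θ p) ∈ (i.1 : Set X) := by
      rw [← i.2.1.range_fromSpec]; exact ⟨_, rfl⟩
    exact this
  have hl₂f : l₂ ≫ f = l₁ ≫ f := by
    obtain ⟨ψ₂, hψ₂⟩ := pp_factor_affine hW (CommRingCat.of V) (l₂ ≫ f)
      (by rw [Scheme.Hom.comp_apply]; exact i.2.2.1 (hl₂c _))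
    have hψ₂' : ψ₂ ≫ j = φW := by
      apply pp_spec_map_cancel hW
      rw [hφW, Spec.map_comp, Category.assoc, hψ₂, ← Category.assoc, hl₂]
    have : ψ₂ = ψ₁ := by
      ext b
      exact congrArg (fun g => g.hom b) (hψ₂'.trans hψ₁'.symm)
    rw [← hψ₁, ← hψ₂, this]
  have w : CommSq (X.fromSpecResidueField η) (Spec.map j) f (l₁ ≫ f) :=
    ⟨by rw [← hl₁, Category.assoc]⟩
  have huniq : Subsingleton w.LiftStruct :=
    IsSeparated.valuativeCriterion f { R := V, K := X.residueField η, commSq := w, .. }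
  have hl : l₁ = l₂ := congrArg CommSq.LiftStruct.l
    (Subsingleton.elim (⟨l₁, hl₁, rfl⟩ : w.LiftStruct) ⟨l₂, hl₂, hl₂f⟩)
  refine Set.mem_iUnion₂.2 ⟨i, his, ?_⟩
  rw [← hl₁c, hl]
  exact hl₂c _

lemma pp_closure_compact {X S : Scheme.{u}} (f : X ⟶ S) [IsSeparated f] [LocallyOfFiniteType f]
    (hE : ValuativeCriterion.Existence f) [CompactSpace S] (η : X) :
    IsCompact (closure {η}) := by
  classical
  have key : ∀ W : S.affineOpens, ∃ Q : Set X, IsCompact Q ∧ closure {η} ∩ f ⁻¹ᵁ W.1 ⊆ Q := by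
    intro W
    by_cases h : f η ∈ W.1
    · exact pp_local_cover f hE η W.2 h
    · refine ⟨∅, isCompact_empty, ?_⟩
      rintro x ⟨hx, hxW⟩
      exact h ((specializes_iff_mem_closure.2 hx).mem_open (f ⁻¹ᵁ W.1).2 hxW)
  choose Q hQ hQ' using key
  obtain ⟨s, hs⟩ := isCompact_univ.elim_finite_subcover (fun W : S.affineOpens => (W.1 : Set S))
    (fun W => W.1.2) (by
      intro y _
      obtain ⟨U, hU, hy, -⟩ :=
        (S.isBasis_affineOpens).exists_subset_of_mem_open (Set.mem_univ y) isOpen_univ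
      obtain ⟨U, hU, rfl⟩ := hU
      exact Set.mem_iUnion.2 ⟨⟨U, hU⟩, hy⟩)
  refine (s.isCompact_biUnion fun W _ => hQ W).of_isClosed_subset isClosed_closure ?_
  intro x hx
  obtain ⟨W, hWs, hW⟩ := Set.mem_iUnion₂.1 (hs (Set.mem_univ (f x)))
  exact Set.mem_iUnion₂.2 ⟨W, hWs, hQ' W ⟨hx, hW⟩⟩

lemma pp_finite_top {X : Type*} [TopologicalSpace X] (U : Set X) (hU : IsOpen U)
    [NoetherianSpace U] [QuasiSober U] :
    {η : X | IsMinimalPoint η ∧ (closure {η} ∩ U).Nonempty}.Finite := by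
  have hfin : (irreducibleComponents U).Finite := NoetherianSpace.finite_irreducibleComponents
  have hmem : ∀ η : X, (closure {η} ∩ U).Nonempty → η ∈ U := by
    rintro η ⟨x, hx, hxU⟩
    exact (specializes_iff_mem_closure.2 hx).mem_open hU hxU
  have hcl : ∀ η : U, closure {η} = (Subtype.val : U → X) ⁻¹' closure {η.1} := by
    intro η
    rw [Topology.IsInducing.subtypeVal.closure_eq_preimage_closure_image]
    simp
  refine Set.Finite.of_finite_image
    (f := fun η => (Subtype.val : U → X) ⁻¹' closure {η}) (hfin.subset ?_) ?_
  · rintro _ ⟨η, ⟨hη, hne⟩, rfl⟩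
    have hηU := hmem η hne
    change (Subtype.val : U → X) ⁻¹' closure {(⟨η, hηU⟩ : U).1} ∈ _
    rw [← hcl]
    refine ⟨isIrreducible_singleton.closure, fun T hT hle => ?_⟩
    have hg := hT.isGenericPoint_genericPoint_closure
    have h1 : (⟨η, hηU⟩ : U) ∈ closure {hT.genericPoint} := by
      rw [hg.def]
      exact subset_closure (hle (subset_closure rfl))
    rw [hcl] at h1
    have h2 := hη _ h1
    have h3 : hT.genericPoint = ⟨η, hηU⟩ := Subtype.ext h2
    rw [h3] at hg
    rw [hg.def]
    exact subset_closure
  · rintro η ⟨hη, hne⟩ η' ⟨hη', hne'⟩ h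
    have : (⟨η', hmem η' hne'⟩ : U) ∈ (Subtype.val : U → X) ⁻¹' closure {η} := by
      have h : (Subtype.val : U → X) ⁻¹' closure {η} = (Subtype.val : U → X) ⁻¹' closure {η'} := h
      rw [h]
      exact subset_closure rfl
    exact hη' _ this

lemma pp_finite {X : Scheme.{u}} [IsLocallyNoetherian X] (U : Set X) (hU : IsOpen U)
    (hc : IsCompact U) :
    {η : X | IsMinimalPoint η ∧ (closure {η} ∩ U).Nonempty}.Finite := by
  let U'' : X.Opens := ⟨U, hU⟩
  have : CompactSpace U'' := isCompact_iff_compactSpace.1 hc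
  have : IsNoetherian U'' := {}
  have : NoetherianSpace U := inferInstanceAs (NoetherianSpace U'')
  have : QuasiSober U := hU.isOpenEmbedding_subtypeVal.quasiSober
  exact pp_finite_top U hU

/-- Let `X` be a scheme which is partially proper over a noetherian
scheme.  Then `X` is a locally finite union of quasi-compact closed subsets: the closures
`Z_η` of the minimal points `η` of `X` are quasi-compact closed sets covering `X`, and
every quasi-compact open subset of `X` meets only finitely many of the `Z_η`. -/
theorem locally_finite_union_of_qc_closed_of_partiallyProper
    {X S : Scheme.{u}} (f : X ⟶ S) (hf : PartiallyProper f) [IsNoetherian S] :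
    (∀ η : X, IsMinimalPoint η → IsCompact (closure {η})) ∧
    (∀ x : X, ∃ η : X, IsMinimalPoint η ∧ x ∈ closure {η}) ∧
    (∀ U : Set X, IsOpen U → IsCompact U →
      {η : X | IsMinimalPoint η ∧ (closure {η} ∩ U).Nonempty}.Finite) := by
  obtain ⟨h1, h2, h3⟩ := hf
  have : IsLocallyNoetherian X := LocallyOfFiniteType.isLocallyNoetherian f
  refine ⟨fun η _ => pp_closure_compact f
    (ValuativeCriterion.Existence.of_specializingMap f h3) η, fun x => ?_, pp_finite⟩
  have hI := isIrreducible_irreducibleComponent (x := x)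
  have hg := hI.isGenericPoint_genericPoint isClosed_irreducibleComponent
  refine ⟨hI.genericPoint, fun y hy => ?_, ?_⟩
  · have hsub : irreducibleComponent x ⊆ closure {y} := by
      rw [← hg.def]
      exact isClosed_closure.closure_subset_iff.2 (Set.singleton_subset_iff.2 hy)
    have he : closure {y} = irreducibleComponent x :=
      eq_irreducibleComponent isIrreducible_singleton.closure.isPreirreducible hsub
    exact IsGenericPoint.eq he hg
  · rw [hg.def]
    exact mem_irreducibleComponent
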